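/- arXiv:1811.03843 — 6 statements merged into one kernel-verified Lean document; each statement's English description precedes it below -/
import Mathlib

section
/- If m is not a root of unity (i.e., m^n ≠ 1 for every integer n ≥ 1), then the linear span of the vectors 1, A^n, B^n (n ≥ 2) is a linear complement in R of the Lie subalgebra L of R generated by A and B; that is, R = L ⊕ span_F{1, A^n, B^n : n ≥ 2} as F-vector spaces. -/
noncomputable section

open FreeAlgebra

attribute [local instance 100] LieRing.ofAssociativeRing

/-- The defining relation `A*B = m • (B*A) + b·1` on the free algebra `F⟨A,B⟩`
(the free unital associative algebra on two generators `A = ι F 0`, `B = ι F 1`). -/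
def twistRel (F : Type*) [Field F] (m b : F) :
    FreeAlgebra F (Fin 2) → FreeAlgebra F (Fin 2) → Prop :=
  fun p q => p = ι F 0 * ι F 1 ∧
    q = m • (ι F 1 * ι F 0) + algebraMap F (FreeAlgebra F (Fin 2)) b

/-- `R = F⟨A,B⟩ / (AB − m·BA − b·1)`. -/
abbrev TwistAlg (F : Type*) [Field F] (m b : F) := RingQuot (twistRel F m b)

/-- The image of the generator `A` in `R`. -/
def genA (F : Type*) [Field F] (m b : F) : TwistAlg F m b :=
  RingQuot.mkAlgHom F (twistRel F m b) (ι F 0)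

/-- The image of the generator `B` in `R`. -/
def genB (F : Type*) [Field F] (m b : F) : TwistAlg F m b :=
  RingQuot.mkAlgHom F (twistRel F m b) (ι F 1)

/-- `C := A*B − B*A` in `R`. -/
def genC (F : Type*) [Field F] (m b : F) : TwistAlg F m b :=
  genA F m b * genB F m b - genB F m b * genA F m b

/-!
Write `L` for the Lie algebra generated by `A` and `B`.

*Spanning.* The relation lets one move every `B` to the left, so `R` is spanned by the monomials
`B ^ i * A ^ j`. By induction on `i`, `B ^ i * A ^ (i + d)` lies in `L + F A ^ d` and
`B ^ (i + d) * A ^ i` lies in `L + F B ^ d`: up to a monomial with smaller `i`, bracketing with `A`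
(resp. `B`) multiplies a monomial by `(m ^ i - 1) A` (resp. `(m ^ i - 1) B`), it kills `A ^ d`
(resp. `B ^ d`), and `m ^ i - 1` is invertible. The diagonal case `d = 0` comes from bracketing
`B ^ (i - 1) * A ^ i`, which lies in `L + F A = L`, with `B`.

*Independence.* With `c = b / (1 - m)`, sending `A`, `B` to `x`, `y` maps `R` onto the commutative
algebra `F[x, y] / (x y - c)`, where `1`, `x ^ n`, `y ^ n` (`n ≥ 1`) form a basis. All brackets
vanish there, so `L` maps into the span of `x` and `y`, which meets the span of the other basis
vectors trivially.
-/

section LieAlgebra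

variable {K 𝔤 M : Type*} [CommRing K] [LieRing 𝔤] [LieAlgebra K 𝔤] [AddCommGroup M] [Module K M]

theorem lieSpan_le_comap_span_image {f : 𝔤 →ₗ[K] M} (hf : ∀ x y : 𝔤, f ⁅x, y⁆ = 0) (s : Set 𝔤) :
    (LieSubalgebra.lieSpan K 𝔤 s).toSubmodule ≤ (Submodule.span K (f '' s)).comap f := by
  intro x hx
  induction hx using LieSubalgebra.lieSpan_induction with
  | mem x hx => exact Submodule.subset_span ⟨x, hx, rfl⟩
  | zero => exact zero_mem _
  | add x y _ _ hx hy => exact add_mem hx hy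
  | smul a x _ hx => exact Submodule.smul_mem _ a hx
  | lie x y _ _ _ _ => simp only [Submodule.mem_comap, hf, zero_mem]

theorem disjoint_lieSpan_image_span_image_compl {ι : Type*} {v : ι → 𝔤} {f : 𝔤 →ₗ[K] M}
    (hf : ∀ x y : 𝔤, f ⁅x, y⁆ = 0) (hv : LinearIndependent K (f ∘ v)) (s : Set ι) :
    Disjoint (LieSubalgebra.lieSpan K 𝔤 (v '' s)).toSubmodule (Submodule.span K (v '' sᶜ)) := by
  rw [Submodule.disjoint_def]
  intro x hx_lie hx_span
  have hfx_s : f x ∈ Submodule.span K (f ∘ v '' s) := by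
    rw [Set.image_comp]
    exact lieSpan_le_comap_span_image hf _ hx_lie
  have hfx_compl : f x ∈ Submodule.span K (f ∘ v '' sᶜ) := by
    rw [Set.image_comp, Submodule.span_image]
    exact Submodule.mem_map_of_mem hx_span
  have hfx : f x = 0 :=
    Submodule.disjoint_def.1 (hv.disjoint_span_image disjoint_compl_right) _ hfx_s hfx_compl
  exact Submodule.disjoint_def.1 (Submodule.range_ker_disjoint hv) x
    (Submodule.span_mono (Set.image_subset_range v _) hx_span) hfx

theorem lie_mem_of_mem_sup_span_singleton {L : LieSubalgebra K 𝔤} {a x y : 𝔤} (ha : a ∈ L)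
    (hay : ⁅a, y⁆ ∈ L) (hx : x ∈ L.toSubmodule ⊔ Submodule.span K {y}) : ⁅a, x⁆ ∈ L := by
  obtain ⟨l, hl, z, hz, rfl⟩ := Submodule.mem_sup.1 hx
  obtain ⟨t, rfl⟩ := Submodule.mem_span_singleton.1 hz
  rw [lie_add, lie_smul]
  exact add_mem (L.lie_mem ha hl) (L.smul_mem t hay)

end LieAlgebra

theorem mem_of_smul_add_smul_mem {K M : Type*} [DivisionRing K] [AddCommGroup M] [Module K M]
    {N : Submodule K M} {r s : K} {x y : M} (hr : r ≠ 0) (hy : y ∈ N) (h : r • x + s • y ∈ N) :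
    x ∈ N :=
  (N.smul_mem_iff hr).1 ((N.add_mem_iff_left (N.smul_mem s hy)).1 h)

section Generators

variable {K R S : Type*} [CommSemiring K] [Semiring R] [Algebra K R] [Semiring S] [Algebra K S]

theorem eq_top_of_adjoin_eq_top {s : Set R} (hs : Algebra.adjoin K s = ⊤) {M : Submodule K R}
    (one_mem : 1 ∈ M) (mul_mem : ∀ a ∈ s, ∀ x ∈ M, a * x ∈ M) : M = ⊤ := by
  have adjoin_mul_mem : ∀ a ∈ Algebra.adjoin K s, ∀ x ∈ M, a * x ∈ M := by
    intro a ha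
    induction ha using Algebra.adjoin_induction with
    | mem a ha => exact mul_mem a ha
    | algebraMap r =>
      intro x hx
      rw [← Algebra.smul_def]
      exact M.smul_mem r hx
    | add a a' _ _ ha ha' =>
      intro x hx
      rw [add_mul]
      exact add_mem (ha x hx) (ha' x hx)
    | mul a a' _ _ ha ha' =>
      intro x hx
      rw [mul_assoc]
      exact ha _ (ha' x hx)
  rw [eq_top_iff]
  intro a _
  simpa only [mul_one] using adjoin_mul_mem a (hs ▸ Algebra.mem_top) 1 one_mem

theorem commute_map_of_adjoin_eq_top {s : Set R} (hs : Algebra.adjoin K s = ⊤) {φ : R →ₐ[K] S}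
    (hφ : ∀ x ∈ s, ∀ y ∈ s, Commute (φ x) (φ y)) (x y : R) : Commute (φ x) (φ y) := by
  have mem_adjoin : ∀ z, φ z ∈ Algebra.adjoin K (φ '' s) := by
    intro z
    rw [← AlgHom.map_adjoin, hs]
    exact ⟨z, Algebra.mem_top, rfl⟩
  refine Algebra.commute_of_mem_adjoin_of_forall_mem_commute (mem_adjoin y) ?_
  rintro _ ⟨b, hb, rfl⟩
  refine (Algebra.commute_of_mem_adjoin_of_forall_mem_commute (mem_adjoin x) ?_).symm
  rintro _ ⟨a, ha, rfl⟩
  exact hφ b hb a ha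

end Generators

/-- The family `…, B ^ 2, B, 1, A, A ^ 2, …` indexed by `ℤ`: nonnegative indices are powers of `A`,
negative ones are powers of `B`. -/
def signedPow {R : Type*} [Monoid R] (A B : R) : ℤ → R
  | Int.ofNat n => A ^ n
  | Int.negSucc n => B ^ (n + 1)

section SignedPow

variable {R : Type*} [Monoid R] (A B : R)

theorem signedPow_natCast (n : ℕ) : signedPow A B n = A ^ n := rfl

theorem signedPow_zero : signedPow A B 0 = 1 := pow_zero A

theorem signedPow_neg_natCast (n : ℕ) : signedPow A B (-n) = B ^ n := by
  cases n with
  | zero => simp only [Nat.cast_zero, neg_zero, pow_zero, signedPow_zero]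
  | succ n => rfl

theorem signedPow_image_pair : signedPow A B '' {1, -1} = {A, B} := by
  rw [Set.image_pair]
  congr
  · simpa using signedPow_natCast A B 1
  · simpa using signedPow_neg_natCast A B 1

theorem signedPow_image_compl_pair :
    signedPow A B '' {1, -1}ᶜ =
      {1} ∪ {w | ∃ n : ℕ, 2 ≤ n ∧ w = A ^ n} ∪ {w | ∃ n : ℕ, 2 ≤ n ∧ w = B ^ n} := by
  ext w
  constructor
  · rintro ⟨k, hk, rfl⟩
    simp only [Set.mem_compl_iff, Set.mem_insert_iff, Set.mem_singleton_iff, not_or] at hk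
    obtain ⟨n, rfl | rfl⟩ := k.eq_nat_or_neg
    · obtain rfl | hn : n = 0 ∨ 2 ≤ n := by omega
      · exact Or.inl (Or.inl (signedPow_zero A B))
      · exact Or.inl (Or.inr ⟨n, hn, signedPow_natCast A B n⟩)
    · obtain rfl | hn : n = 0 ∨ 2 ≤ n := by omega
      · exact Or.inl (Or.inl (signedPow_zero A B))
      · exact Or.inr ⟨n, hn, signedPow_neg_natCast A B n⟩
  · rintro ((rfl | ⟨n, hn, rfl⟩) | ⟨n, hn, rfl⟩)
    · exact ⟨0, by simp, signedPow_zero A B⟩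
    · exact ⟨n, by grind, signedPow_natCast A B n⟩
    · exact ⟨-n, by grind, signedPow_neg_natCast A B n⟩

end SignedPow

/-- The elements `A` and `B` of an algebra satisfy the defining relation of `TwistAlg`. -/
structure IsTwistPair {K R : Type*} [CommSemiring K] [Semiring R] [Algebra K R]
    (m b : K) (A B : R) : Prop where
  mul_eq : A * B = m • (B * A) + algebraMap K R b

namespace IsTwistPair

open Finset (range)

section CommSemiring

variable {K R : Type*} [CommSemiring K] [Semiring R] [Algebra K R] {m b : K} {A B : R}

theorem mul_pow_succ (h : IsTwistPair m b A B) (n : ℕ) :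
    A * B ^ (n + 1) =
      m ^ (n + 1) • (B ^ (n + 1) * A) + (b * ∑ i ∈ range (n + 1), m ^ i) • B ^ n := by
  induction n with
  | zero => simpa [Algebra.algebraMap_eq_smul_one] using h.mul_eq
  | succ n ih =>
    rw [pow_succ B (n + 1), ← mul_assoc, ih, add_mul, smul_mul_assoc, mul_assoc, h.mul_eq,
      smul_mul_assoc, ← pow_succ, mul_add, mul_smul_comm, ← mul_assoc, ← pow_succ,
      Algebra.algebraMap_eq_smul_one, mul_smul_comm, mul_one, Finset.sum_range_succ _ (n + 1)]
    module

theorem pow_succ_mul (h : IsTwistPair m b A B) (n : ℕ) :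
    A ^ (n + 1) * B =
      m ^ (n + 1) • (B * A ^ (n + 1)) + (b * ∑ i ∈ range (n + 1), m ^ i) • A ^ n := by
  induction n with
  | zero => simpa [Algebra.algebraMap_eq_smul_one] using h.mul_eq
  | succ n ih =>
    rw [pow_succ' A (n + 1), mul_assoc, ih, mul_add, mul_smul_comm, ← mul_assoc, h.mul_eq,
      mul_smul_comm, ← pow_succ', add_mul, smul_mul_assoc, mul_assoc, ← pow_succ',
      Algebra.algebraMap_eq_smul_one, smul_mul_assoc, one_mul, Finset.sum_range_succ _ (n + 1)]
    module

theorem span_pow_mul_pow_eq_top (h : IsTwistPair m b A B) (hgen : Algebra.adjoin K {A, B} = ⊤) :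
    Submodule.span K (Set.range fun p : ℕ × ℕ ↦ B ^ p.1 * A ^ p.2) = ⊤ := by
  set N := Submodule.span K (Set.range fun p : ℕ × ℕ ↦ B ^ p.1 * A ^ p.2)
  have monomial_mem : ∀ i j, B ^ i * A ^ j ∈ N := fun i j ↦ Submodule.subset_span ⟨(i, j), rfl⟩
  have A_mul_monomial_mem : ∀ i j, A * (B ^ i * A ^ j) ∈ N := by
    rintro (_ | i) j
    · simpa [← pow_succ'] using monomial_mem 0 (j + 1)
    · rw [← mul_assoc, h.mul_pow_succ, add_mul, smul_mul_assoc, smul_mul_assoc, mul_assoc,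
        ← pow_succ']
      exact add_mem (N.smul_mem _ (monomial_mem _ _)) (N.smul_mem _ (monomial_mem _ _))
  have B_mul_monomial_mem : ∀ i j, B * (B ^ i * A ^ j) ∈ N := by
    intro i j
    rw [← mul_assoc, ← pow_succ']
    exact monomial_mem _ _
  have le_comap_mulLeft : ∀ a ∈ ({A, B} : Set R), N ≤ N.comap (LinearMap.mulLeft K a) := by
    rintro a (rfl | rfl) <;> rw [Submodule.span_le] <;> rintro _ ⟨⟨i, j⟩, rfl⟩
    · exact A_mul_monomial_mem i j
    · exact B_mul_monomial_mem i j
  exact eq_top_of_adjoin_eq_top hgen (by simpa using monomial_mem 0 0) le_comap_mulLeft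

end CommSemiring

section CommRing

variable {K R : Type*} [CommRing K] [Ring R] [Algebra K R] {m b : K} {A B : R}

theorem lie_pow_succ_mul_pow (h : IsTwistPair m b A B) (n k : ℕ) :
    ⁅A, B ^ (n + 1) * A ^ k⁆ =
      (m ^ (n + 1) - 1) • (B ^ (n + 1) * A ^ (k + 1)) +
        (b * ∑ i ∈ range (n + 1), m ^ i) • (B ^ n * A ^ k) := by
  rw [Ring.lie_def, ← mul_assoc, h.mul_pow_succ, add_mul, smul_mul_assoc, smul_mul_assoc,
    mul_assoc, mul_assoc, ← pow_succ', ← pow_succ]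
  module

theorem lie_pow_mul_pow_succ (h : IsTwistPair m b A B) (n k : ℕ) :
    ⁅B ^ k * A ^ (n + 1), B⁆ =
      (m ^ (n + 1) - 1) • (B ^ (k + 1) * A ^ (n + 1)) +
        (b * ∑ i ∈ range (n + 1), m ^ i) • (B ^ k * A ^ n) := by
  rw [Ring.lie_def, mul_assoc, h.pow_succ_mul, mul_add, mul_smul_comm, mul_smul_comm,
    ← mul_assoc, ← mul_assoc, ← pow_succ, ← pow_succ']
  module

end CommRing

section Field

variable {F R : Type*} [Field F] [Ring R] [Algebra F R] {m b : F} {A B : R}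
  {L : LieSubalgebra F R}

theorem pow_succ_mul_pow_mem_sup (h : IsTwistPair m b A B) (hA : A ∈ L) {n : ℕ}
    (hm : m ^ (n + 1) ≠ 1) (hn : ∀ d, B ^ n * A ^ (n + d) ∈ L.toSubmodule ⊔ F ∙ A ^ d)
    (hdiag : B ^ (n + 1) * A ^ (n + 1) ∈ L.toSubmodule ⊔ F ∙ 1) (d : ℕ) :
    B ^ (n + 1) * A ^ (n + 1 + d) ∈ L.toSubmodule ⊔ F ∙ A ^ d := by
  induction d with
  | zero => simpa using hdiag
  | succ d ih =>
    have hAd : ⁅A, A ^ d⁆ ∈ L := by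
      rw [(Commute.self_pow A d).lie_eq]
      exact zero_mem L
    have hlie := lie_mem_of_mem_sup_span_singleton hA hAd ih
    rw [h.lie_pow_succ_mul_pow] at hlie
    have hprev := hn (d + 1)
    rw [← add_assoc, add_right_comm] at hprev
    exact mem_of_smul_add_smul_mem (sub_ne_zero.2 hm) hprev (Submodule.mem_sup_left hlie)

theorem pow_mul_pow_succ_mem_sup (h : IsTwistPair m b A B) (hB : B ∈ L) {n : ℕ}
    (hm : m ^ (n + 1) ≠ 1) (hn : ∀ d, B ^ (n + d) * A ^ n ∈ L.toSubmodule ⊔ F ∙ B ^ d)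
    (hdiag : B ^ (n + 1) * A ^ (n + 1) ∈ L.toSubmodule ⊔ F ∙ 1) (d : ℕ) :
    B ^ (n + 1 + d) * A ^ (n + 1) ∈ L.toSubmodule ⊔ F ∙ B ^ d := by
  induction d with
  | zero => simpa using hdiag
  | succ d ih =>
    have hBd : ⁅B, B ^ d⁆ ∈ L := by
      rw [(Commute.self_pow B d).lie_eq]
      exact zero_mem L
    have hlie := neg_mem (lie_mem_of_mem_sup_span_singleton hB hBd ih)
    rw [lie_skew, h.lie_pow_mul_pow_succ] at hlie
    have hprev := hn (d + 1)
    rw [← add_assoc, add_right_comm] at hprev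
    exact mem_of_smul_add_smul_mem (sub_ne_zero.2 hm) hprev (Submodule.mem_sup_left hlie)

theorem pow_succ_mul_pow_succ_mem_sup (h : IsTwistPair m b A B) (hA : A ∈ L) (hB : B ∈ L) {n : ℕ}
    (hm : m ^ (n + 1) ≠ 1) (hn : ∀ d, B ^ n * A ^ (n + d) ∈ L.toSubmodule ⊔ F ∙ A ^ d) :
    B ^ (n + 1) * A ^ (n + 1) ∈ L.toSubmodule ⊔ F ∙ 1 := by
  have hBA : ⁅B, A ^ 1⁆ ∈ L := by
    rw [pow_one]
    exact L.lie_mem hB hA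
  have hlie := neg_mem (lie_mem_of_mem_sup_span_singleton hB hBA (hn 1))
  rw [lie_skew, h.lie_pow_mul_pow_succ] at hlie
  have hn0 : B ^ n * A ^ n ∈ L.toSubmodule ⊔ F ∙ 1 := by simpa using hn 0
  exact mem_of_smul_add_smul_mem (sub_ne_zero.2 hm) hn0 (Submodule.mem_sup_left hlie)

theorem pow_mul_pow_add_mem_sup (h : IsTwistPair m b A B) (hroot : ∀ n : ℕ, 1 ≤ n → m ^ n ≠ 1)
    (hA : A ∈ L) (hB : B ∈ L) (n : ℕ) :
    (∀ d, B ^ n * A ^ (n + d) ∈ L.toSubmodule ⊔ F ∙ A ^ d) ∧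
      ∀ d, B ^ (n + d) * A ^ n ∈ L.toSubmodule ⊔ F ∙ B ^ d := by
  induction n with
  | zero =>
    constructor <;> intro d <;> apply Submodule.mem_sup_right <;>
      simp [Submodule.mem_span_singleton_self]
  | succ n ih =>
    have hm := hroot (n + 1) n.succ_pos
    have hdiag := h.pow_succ_mul_pow_succ_mem_sup hA hB hm ih.1
    exact ⟨h.pow_succ_mul_pow_mem_sup hA hm ih.1 hdiag, h.pow_mul_pow_succ_mem_sup hB hm ih.2 hdiag⟩

theorem pow_mul_pow_mem_sup_signedPow (h : IsTwistPair m b A B)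
    (hroot : ∀ n : ℕ, 1 ≤ n → m ^ n ≠ 1) (hA : A ∈ L) (hB : B ∈ L) (i j : ℕ) :
    B ^ i * A ^ j ∈ L.toSubmodule ⊔ F ∙ signedPow A B (j - i) := by
  obtain ⟨d, rfl | rfl⟩ : ∃ d, j = i + d ∨ i = j + d := by
    obtain hij | hji := le_total i j
    · exact (Nat.exists_eq_add_of_le hij).imp fun _ ↦ Or.inl
    · exact (Nat.exists_eq_add_of_le hji).imp fun _ ↦ Or.inr
  · have := (h.pow_mul_pow_add_mem_sup hroot hA hB i).1 d
    simpa [signedPow_natCast] using this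
  · have := (h.pow_mul_pow_add_mem_sup hroot hA hB j).2 d
    simpa [signedPow_neg_natCast] using this

theorem codisjoint_lieSpan_span_signedPow (h : IsTwistPair m b A B)
    (hgen : Algebra.adjoin F {A, B} = ⊤) (hroot : ∀ n : ℕ, 1 ≤ n → m ^ n ≠ 1) :
    Codisjoint (LieSubalgebra.lieSpan F R (signedPow A B '' {1, -1})).toSubmodule
      (Submodule.span F (signedPow A B '' {1, -1}ᶜ)) := by
  set L := LieSubalgebra.lieSpan F R (signedPow A B '' {1, -1}) with hL
  set S := Submodule.span F (signedPow A B '' {1, -1}ᶜ)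
  have signedPow_mem : ∀ k, signedPow A B k ∈ L.toSubmodule ⊔ S := by
    intro k
    by_cases hk : k ∈ ({1, -1} : Set ℤ)
    · exact Submodule.mem_sup_left (LieSubalgebra.subset_lieSpan ⟨k, hk, rfl⟩)
    · exact Submodule.mem_sup_right (Submodule.subset_span ⟨k, hk, rfl⟩)
  rw [signedPow_image_pair] at hL
  have hA : A ∈ L := hL ▸ LieSubalgebra.subset_lieSpan (Set.mem_insert A {B})
  have hB : B ∈ L := hL ▸ LieSubalgebra.subset_lieSpan (Set.mem_insert_of_mem A rfl)
  rw [codisjoint_iff, eq_top_iff, ← h.span_pow_mul_pow_eq_top hgen, Submodule.span_le]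
  rintro _ ⟨⟨i, j⟩, rfl⟩
  have sup_le_sup : L.toSubmodule ⊔ F ∙ signedPow A B (j - i) ≤ L.toSubmodule ⊔ S :=
    sup_le le_sup_left ((Submodule.span_singleton_le_iff_mem _ _).2 (signedPow_mem _))
  exact sup_le_sup (h.pow_mul_pow_mem_sup_signedPow hroot hA hB i j)

end Field

end IsTwistPair

section ShiftOperators

open Finsupp (single)

variable {K : Type*} [CommSemiring K]

/-- Multiplication by `x` on the commutative algebra generated by `x`, `y` with `x y = c`, written
in the basis indexed by `ℤ` whose `n`-th member is `x ^ n` for `n ≥ 0` and `y ^ (-n)` for `n ≤ 0`.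
-/
def raise (c : K) : Module.End K (ℤ →₀ K) :=
  Finsupp.linearCombination K fun n : ℤ ↦ single (n + 1) (if 0 ≤ n then 1 else c)

/-- Multiplication by `y` on the same algebra and in the same basis as `raise`. -/
def lower (c : K) : Module.End K (ℤ →₀ K) :=
  Finsupp.linearCombination K fun n : ℤ ↦ single (n - 1) (if n ≤ 0 then 1 else c)

theorem raise_single (c : K) (n : ℤ) (t : K) :
    raise c (single n t) = single (n + 1) (if 0 ≤ n then t else t * c) := by
  simp [raise, Finsupp.linearCombination_single, mul_ite]

theorem lower_single (c : K) (n : ℤ) (t : K) :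
    lower c (single n t) = single (n - 1) (if n ≤ 0 then t else t * c) := by
  simp [lower, Finsupp.linearCombination_single, mul_ite]

theorem raise_mul_lower (c : K) : raise c * lower c = algebraMap K _ c := by
  ext n : 2
  rcases le_or_gt n 0 with hn | hn
  · simp [raise_single, lower_single, hn, show ¬ 1 ≤ n by omega]
  · simp [raise_single, lower_single, hn.not_ge, show 1 ≤ n by omega]

theorem lower_mul_raise (c : K) : lower c * raise c = algebraMap K _ c := by
  ext n : 2
  rcases le_or_gt 0 n with hn | hn
  · simp [raise_single, lower_single, hn, show ¬ n + 1 ≤ 0 by omega]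
  · simp [raise_single, lower_single, hn.not_ge, show n + 1 ≤ 0 by omega]

theorem commute_raise_lower (c : K) : Commute (raise c) (lower c) :=
  (raise_mul_lower c).trans (lower_mul_raise c).symm

theorem raise_pow_single_zero (c : K) (n : ℕ) :
    (raise c ^ n) (single 0 1) = single (n : ℤ) 1 := by
  induction n with
  | zero => simp
  | succ n ih => simp [pow_succ', ih, raise_single]

theorem lower_pow_single_zero (c : K) (n : ℕ) :
    (lower c ^ n) (single 0 1) = single (-n : ℤ) 1 := by
  induction n with
  | zero => simp
  | succ n ih => simp [pow_succ', ih, lower_single, sub_eq_neg_add]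

theorem signedPow_raise_lower_single_zero (c : K) (k : ℤ) :
    signedPow (raise c) (lower c) k (single 0 1) = single k 1 := by
  obtain ⟨n, rfl | rfl⟩ := k.eq_nat_or_neg
  · rw [signedPow_natCast, raise_pow_single_zero]
  · rw [signedPow_neg_natCast, lower_pow_single_zero]

theorem isTwistPair_raise_lower {m b c : K} (hc : c = m * c + b) :
    IsTwistPair m b (raise c) (lower c) where
  mul_eq := by
    rw [raise_mul_lower, lower_mul_raise, Algebra.smul_def, ← map_mul, ← map_add, ← hc]

end ShiftOperators

namespace TwistAlg

variable {F : Type*} [Field F] {m b : F}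

theorem isTwistPair_genA_genB (m b : F) : IsTwistPair m b (genA F m b) (genB F m b) where
  mul_eq := by
    simpa [genA, genB] using RingQuot.mkAlgHom_rel F (s := twistRel F m b) ⟨rfl, rfl⟩

theorem adjoin_genA_genB (m b : F) :
    Algebra.adjoin F {genA F m b, genB F m b} = ⊤ := by
  have range_ι : Set.range (ι F : Fin 2 → FreeAlgebra F (Fin 2)) = {ι F 0, ι F 1} := by
    ext
    simp [Fin.exists_fin_two, eq_comm]
  have map_adjoin := (RingQuot.mkAlgHom F (twistRel F m b)).map_adjoin {ι F 0, ι F 1}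
  rw [Set.image_pair, ← range_ι, FreeAlgebra.adjoin_range_ι, Algebra.map_top,
    (AlgHom.range_eq_top _).2 (RingQuot.mkAlgHom_surjective F _)] at map_adjoin
  exact map_adjoin.symm

section Lift

variable {S : Type*} [Semiring S] [Algebra F S] {x y : S}

/-- The universal property of `TwistAlg`: the algebra map sending `A` and `B` to a given pair that
satisfies the defining relation. -/
def lift (h : IsTwistPair m b x y) : TwistAlg F m b →ₐ[F] S :=
  RingQuot.liftAlgHom F ⟨FreeAlgebra.lift F ![x, y], by
    rintro _ _ ⟨rfl, rfl⟩
    simpa using h.mul_eq⟩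

theorem lift_genA (h : IsTwistPair m b x y) : lift h (genA F m b) = x := by
  simp [lift, genA]

theorem lift_genB (h : IsTwistPair m b x y) : lift h (genB F m b) = y := by
  simp [lift, genB]

theorem lift_signedPow (h : IsTwistPair m b x y) (k : ℤ) :
    lift h (signedPow (genA F m b) (genB F m b) k) = signedPow x y k := by
  cases k <;> simp only [signedPow, map_pow, lift_genA, lift_genB]

theorem commute_lift (h : IsTwistPair m b x y) (hxy : Commute x y) (p q : TwistAlg F m b) :
    Commute (lift h p) (lift h q) := by
  have commute_generators : ∀ u ∈ ({genA F m b, genB F m b} : Set (TwistAlg F m b)),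
      ∀ v ∈ ({genA F m b, genB F m b} : Set (TwistAlg F m b)),
        Commute (lift h u) (lift h v) := by
    rintro u (rfl | rfl) v (rfl | rfl) <;> simp only [lift_genA, lift_genB]
    exacts [Commute.refl x, hxy, hxy.symm, Commute.refl y]
  exact commute_map_of_adjoin_eq_top (adjoin_genA_genB m b) commute_generators p q

end Lift

theorem exists_linearMap_signedPow_eq_single (hm1 : m ≠ 1) :
    ∃ f : TwistAlg F m b →ₗ[F] (ℤ →₀ F), (∀ p q : TwistAlg F m b, f ⁅p, q⁆ = 0) ∧
      ∀ k, f (signedPow (genA F m b) (genB F m b) k) = Finsupp.single k 1 := by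
  have hc : b / (1 - m) = m * (b / (1 - m)) + b := by
    have : 1 - m ≠ 0 := sub_ne_zero.2 hm1.symm
    field_simp
    ring
  have h := isTwistPair_raise_lower hc
  refine ⟨(LinearMap.applyₗ (Finsupp.single 0 1)).comp (lift h).toLinearMap,
    fun p q ↦ ?_, fun k ↦ ?_⟩
  · have hpq : lift h ⁅p, q⁆ = 0 := by
      rw [Ring.lie_def, map_sub, map_mul, map_mul,
        (commute_lift h (commute_raise_lower _) p q).eq, sub_self]
    simp [hpq]
  · simp [lift_signedPow, signedPow_raise_lower_single_zero]

theorem disjoint_lieSpan_span_signedPow (hm1 : m ≠ 1) (s : Set ℤ) :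
    Disjoint
      (LieSubalgebra.lieSpan F (TwistAlg F m b)
        (signedPow (genA F m b) (genB F m b) '' s)).toSubmodule
      (Submodule.span F (signedPow (genA F m b) (genB F m b) '' sᶜ)) := by
  obtain ⟨f, hf_lie, hf_signedPow⟩ := exists_linearMap_signedPow_eq_single (b := b) hm1
  have hv : LinearIndependent F (f ∘ signedPow (genA F m b) (genB F m b)) := by
    rw [show f ∘ signedPow (genA F m b) (genB F m b) = fun k ↦ Finsupp.single k 1 from
      funext hf_signedPow]
    exact Finsupp.linearIndependent_single_one F ℤ
  exact disjoint_lieSpan_image_span_image_compl hf_lie hv s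

end TwistAlg

theorem stmt0 (F : Type*) [Field F] (m b : F) (hm0 : m ≠ 0) (hm1 : m ≠ 1)
    (hroot : ∀ n : ℕ, 1 ≤ n → m ^ n ≠ 1) :
    IsCompl
      (LieSubalgebra.lieSpan F (TwistAlg F m b) {genA F m b, genB F m b}).toSubmodule
      (Submodule.span F
        ({(1 : TwistAlg F m b)} ∪
         {w | ∃ n : ℕ, 2 ≤ n ∧ w = genA F m b ^ n} ∪
         {w | ∃ n : ℕ, 2 ≤ n ∧ w = genB F m b ^ n})) := by
  rw [← signedPow_image_compl_pair, ← signedPow_image_pair]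
  exact ⟨TwistAlg.disjoint_lieSpan_span_signedPow hm1 {1, -1},
    (TwistAlg.isTwistPair_genA_genB m b).codisjoint_lieSpan_span_signedPow
      (TwistAlg.adjoin_genA_genB m b) hroot⟩
end
end

section
/- The vectors C^k A^l (k ≥ 0, l ≥ 1), B^l C^k (k ≥ 0, l ≥ 1), and C^k (k ≥ 0) form a basis of R as an F-vector space; that is, this family is linearly independent and spans R. -/
noncomputable section

open FreeAlgebra

/-- The family consisting of the vectors `C^k * A^l` (`k ≥ 0`, `l ≥ 1`),
`B^l * C^k` (`k ≥ 0`, `l ≥ 1`) and `C^k` (`k ≥ 0`). -/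
def basisFam (F : Type*) [Field F] (m b : F) :
    (ℕ × ℕ) ⊕ (ℕ × ℕ) ⊕ ℕ → TwistAlg F m b
  | .inl (k, l) => genC F m b ^ k * genA F m b ^ (l + 1)
  | .inr (.inl (k, l)) => genB F m b ^ (l + 1) * genC F m b ^ k
  | .inr (.inr k) => genC F m b ^ k

/-!
Commuting `C` past `A` and `B` only produces powers of `m`, and both `AB` and `BA` are affine
functions of `C` because `m ≠ 1`. Hence the monomials `B^r C^k A^s` with `r = 0` or `s = 0` span a
subspace that contains `1` and is stable under left multiplication by `A` and `B`.

For independence, let `A` shift `⨁ n : ℤ, F[X] eₙ` by `eₙ ↦ eₙ₊₁` and let `B` shift back with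
weights `fₙ`. The relation becomes the recurrence `fₙ = m fₙ₊₁ + b`, solved by
`fₙ = (m^(1-n) X - b) / (m - 1)`, and then `C` multiplies `eₙ` by `m^(-n) X`. Applied to `e₀`,
distinct monomials yield either multiples of distinct `eₙ`, or a fixed nonzero polynomial times
distinct powers of a scalar multiple of `X`.
-/

section General

theorem mul_pow_of_semiconjBy_smul {F R : Type*} [CommSemiring F] [Semiring R] [Algebra F R]
    {q : F} {x y : R} (h : SemiconjBy x y (q • y)) (k : ℕ) :
    x * y ^ k = q ^ k • (y ^ k * x) := by
  rw [(h.pow_right k).eq, smul_pow, smul_mul_assoc]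

theorem eq_top_of_adjoin_eq_top_of_mul_mem {F R : Type*} [CommSemiring F] [Semiring R]
    [Algebra F R] {s : Set R} (hs : Algebra.adjoin F s = ⊤) {W : Submodule F R} (one : 1 ∈ W)
    (mul_mem : ∀ a ∈ s, ∀ x ∈ W, a * x ∈ W) : W = ⊤ := by
  rw [eq_top_iff, ← Algebra.top_toSubmodule, ← hs, Algebra.adjoin_eq_span, Submodule.span_le]
  intro x hx
  induction hx using Submonoid.closure_induction_left with
  | one => exact one
  | mul_left a ha y _ hy => exact mul_mem a ha y hy

theorem linearIndependent_mul_pow_of_transcendental {F K : Type*} [CommRing F] [CommRing K]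
    [NoZeroDivisors K] [Algebra F K] {g x : K} (hg : g ≠ 0) (hx : Transcendental F x) :
    LinearIndependent F fun k : ℕ => g * x ^ k := by
  let evalMul : Polynomial F →ₗ[F] K :=
    LinearMap.mulLeft F g ∘ₗ (Polynomial.aeval x).toLinearMap
  have evalMul_injective : Function.Injective evalMul :=
    (mul_right_injective₀ hg).comp (transcendental_iff_injective.1 hx)
  simpa [evalMul, Function.comp_def] using
    (Polynomial.basisMonomials F).linearIndependent.map' evalMul
      (LinearMap.ker_eq_bot.2 evalMul_injective)

end General

section TwistedPair

/-- Elements `A`, `B` of an `F`-algebra satisfying the defining relation `AB = m·BA + b·1` of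
`TwistAlg F m b`; algebra maps out of `TwistAlg F m b` correspond to such pairs. -/
def IsTwistedPair {F R : Type*} [CommRing F] [Ring R] [Algebra F R] (m b : F) (A B : R) : Prop :=
  A * B = m • (B * A) + algebraMap F R b

/-- The monomial `B^r C^k A^s`, where `C = ⁅A, B⁆`, with `s - r = n` and `r = 0` or `s = 0`. A
single integer `n` thus records both exponents, one of the two truncations `toNat` being zero. -/
def normalMonomial {R : Type*} [Ring R] (A B : R) (n : ℤ) (k : ℕ) : R :=
  B ^ (-n).toNat * ⁅A, B⁆ ^ k * A ^ n.toNat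

theorem normalMonomial_natCast {R : Type*} [Ring R] (A B : R) (l k : ℕ) :
    normalMonomial A B l k = ⁅A, B⁆ ^ k * A ^ l := by
  simp [normalMonomial]

theorem normalMonomial_neg_natCast {R : Type*} [Ring R] (A B : R) (l k : ℕ) :
    normalMonomial A B (-l) k = B ^ l * ⁅A, B⁆ ^ k := by
  simp [normalMonomial]

theorem mul_normalMonomial_neg_natCast {R : Type*} [Ring R] (A B : R) (l k : ℕ) :
    B * normalMonomial A B (-l) k = normalMonomial A B (-(l + 1 : ℕ)) k := by
  rw [normalMonomial_neg_natCast, normalMonomial_neg_natCast, ← mul_assoc, ← pow_succ']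

namespace IsTwistedPair

section CommRing

variable {F R : Type*} [CommRing F] [Ring R] [Algebra F R] {m b : F} {A B : R}

theorem lie_eq (h : IsTwistedPair m b A B) :
    ⁅A, B⁆ = (m - 1) • (B * A) + algebraMap F R b := by
  rw [Ring.lie_def, h, sub_smul, one_smul]
  abel

theorem smul_lie_eq (h : IsTwistedPair m b A B) :
    m • ⁅A, B⁆ = (m - 1) • (A * B) + algebraMap F R b := by
  rw [Ring.lie_def, smul_sub, ← sub_eq_of_eq_add h, sub_smul, one_smul]
  abel

theorem semiconjBy_left_lie (h : IsTwistedPair m b A B) :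
    SemiconjBy A ⁅A, B⁆ (m • ⁅A, B⁆) := by
  rw [SemiconjBy, h.smul_lie_eq, h.lie_eq, mul_add, add_mul, mul_smul_comm,
    smul_mul_assoc, mul_assoc, Algebra.commutes]

theorem semiconjBy_lie_right (h : IsTwistedPair m b A B) :
    SemiconjBy ⁅A, B⁆ B (m • B) := by
  rw [SemiconjBy, smul_mul_assoc, ← mul_smul_comm, h.smul_lie_eq, h.lie_eq, mul_add,
    add_mul, mul_smul_comm, smul_mul_assoc, mul_assoc, Algebra.commutes]

theorem left_mul_normalMonomial_natCast (h : IsTwistedPair m b A B) (l k : ℕ) :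
    A * normalMonomial A B l k = m ^ k • normalMonomial A B (l + 1 : ℕ) k := by
  rw [normalMonomial_natCast, normalMonomial_natCast, ← mul_assoc,
    mul_pow_of_semiconjBy_smul h.semiconjBy_left_lie, smul_mul_assoc, mul_assoc, ← pow_succ']

end CommRing

section Field

variable {F R : Type*} [Field F] [Ring R] [Algebra F R] {m b : F} {A B : R}

theorem semiconjBy_right_lie (h : IsTwistedPair m b A B) (hm0 : m ≠ 0) :
    SemiconjBy B ⁅A, B⁆ (m⁻¹ • ⁅A, B⁆) := by
  rw [SemiconjBy, smul_mul_assoc, h.semiconjBy_lie_right.eq, smul_mul_assoc, inv_smul_smul₀ hm0]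

theorem right_mul_left (h : IsTwistedPair m b A B) (hm1 : m ≠ 1) :
    B * A = (m - 1)⁻¹ • (⁅A, B⁆ - algebraMap F R b) := by
  rw [h.lie_eq, add_sub_cancel_right, inv_smul_smul₀ (sub_ne_zero.2 hm1)]

theorem left_mul_right (h : IsTwistedPair m b A B) (hm1 : m ≠ 1) :
    A * B = (m - 1)⁻¹ • (m • ⁅A, B⁆ - algebraMap F R b) := by
  rw [h.smul_lie_eq, add_sub_cancel_right, inv_smul_smul₀ (sub_ne_zero.2 hm1)]

theorem left_mul_normalMonomial_neg_natCast_succ (h : IsTwistedPair m b A B) (hm1 : m ≠ 1)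
    (l k : ℕ) :
    A * normalMonomial A B (-(l + 1 : ℕ)) k =
      (m - 1)⁻¹ • (m ^ (l + 1) • normalMonomial A B (-l) (k + 1) -
        b • normalMonomial A B (-l) k) := by
  simp only [normalMonomial_neg_natCast]
  calc A * (B ^ (l + 1) * ⁅A, B⁆ ^ k)
      = A * B * (B ^ l * ⁅A, B⁆ ^ k) := by rw [pow_succ']; simp only [mul_assoc]
    _ = (m - 1)⁻¹ • (m • (⁅A, B⁆ * B ^ l * ⁅A, B⁆ ^ k) -
          b • (B ^ l * ⁅A, B⁆ ^ k)) := by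
        rw [h.left_mul_right hm1]
        simp only [smul_mul_assoc, sub_mul, ← Algebra.smul_def, mul_assoc]
    _ = _ := by
        rw [mul_pow_of_semiconjBy_smul h.semiconjBy_lie_right, smul_mul_assoc, smul_smul,
          ← pow_succ', mul_assoc, ← pow_succ']

theorem right_mul_normalMonomial_natCast_succ (h : IsTwistedPair m b A B) (hm0 : m ≠ 0)
    (hm1 : m ≠ 1) (l k : ℕ) :
    B * normalMonomial A B (l + 1 : ℕ) k =
      m⁻¹ ^ k • (m - 1)⁻¹ • (normalMonomial A B l (k + 1) - b • normalMonomial A B l k) := by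
  simp only [normalMonomial_natCast]
  calc B * (⁅A, B⁆ ^ k * A ^ (l + 1))
      = m⁻¹ ^ k • (⁅A, B⁆ ^ k * (B * A) * A ^ l) := by
        rw [← mul_assoc, mul_pow_of_semiconjBy_smul (h.semiconjBy_right_lie hm0), smul_mul_assoc,
          pow_succ']
        simp only [mul_assoc]
    _ = m⁻¹ ^ k • (m - 1)⁻¹ • (⁅A, B⁆ ^ (k + 1) * A ^ l -
          b • (⁅A, B⁆ ^ k * A ^ l)) := by
        rw [h.right_mul_left hm1, mul_smul_comm, smul_mul_assoc, mul_sub, sub_mul, ← pow_succ,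
          ← Algebra.commutes, mul_assoc (algebraMap F R b), ← Algebra.smul_def]

theorem span_normalMonomial_eq_top (h : IsTwistedPair m b A B) (hm0 : m ≠ 0) (hm1 : m ≠ 1)
    (hAB : Algebra.adjoin F {A, B} = ⊤) :
    Submodule.span F (Set.range fun p : ℤ × ℕ => normalMonomial A B p.1 p.2) = ⊤ := by
  set W := Submodule.span F (Set.range fun p : ℤ × ℕ => normalMonomial A B p.1 p.2)
  have mem (n : ℤ) (k : ℕ) : normalMonomial A B n k ∈ W := Submodule.subset_span ⟨(n, k), rfl⟩
  have mul_mem_of_generators (a : R) (ha : ∀ n k, a * normalMonomial A B n k ∈ W) :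
      ∀ x ∈ W, a * x ∈ W :=
    show W ≤ W.comap (LinearMap.mulLeft F a) from
      Submodule.span_le.2 (Set.range_subset_iff.2 fun p => ha p.1 p.2)
  refine eq_top_of_adjoin_eq_top_of_mul_mem hAB (by simpa [normalMonomial] using mem 0 0) ?_
  rintro a (rfl | rfl) <;> refine mul_mem_of_generators _ fun n k => ?_
  · obtain ⟨l, rfl⟩ | ⟨l, rfl⟩ : (∃ l : ℕ, n = l) ∨ ∃ l : ℕ, n = -(l + 1 : ℕ) :=
      (le_or_gt 0 n).imp (fun _ => ⟨n.toNat, by lia⟩) fun _ => ⟨(-n - 1).toNat, by lia⟩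
    · rw [h.left_mul_normalMonomial_natCast]
      exact W.smul_mem _ (mem _ _)
    · rw [h.left_mul_normalMonomial_neg_natCast_succ hm1]
      exact W.smul_mem _ (W.sub_mem (W.smul_mem _ (mem _ _)) (W.smul_mem _ (mem _ _)))
  · obtain ⟨l, rfl⟩ | ⟨l, rfl⟩ : (∃ l : ℕ, n = (l + 1 : ℕ)) ∨ ∃ l : ℕ, n = -l :=
      (lt_or_ge 0 n).imp (fun _ => ⟨(n - 1).toNat, by lia⟩) fun _ => ⟨(-n).toNat, by lia⟩
    · rw [h.right_mul_normalMonomial_natCast_succ hm0 hm1]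
      exact W.smul_mem _ (W.smul_mem _ (W.sub_mem (mem _ _) (W.smul_mem _ (mem _ _))))
    · rw [mul_normalMonomial_neg_natCast]
      exact mem _ _

end Field

end IsTwistedPair

end TwistedPair

section TwistAlg

variable {F : Type*} [Field F] {m b : F}

theorem isTwistedPair_genA_genB : IsTwistedPair m b (genA F m b) (genB F m b) := by
  have h := RingQuot.mkAlgHom_rel F (s := twistRel F m b) ⟨rfl, rfl⟩
  rwa [map_mul, map_add, map_smul, map_mul, AlgHom.commutes] at h

theorem adjoin_genA_genB : Algebra.adjoin F {genA F m b, genB F m b} = ⊤ := by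
  have range_generators : Set.range (RingQuot.mkAlgHom F (twistRel F m b) ∘ ι F) =
      {genA F m b, genB F m b} := by
    ext x
    simp [Fin.exists_fin_two, genA, genB, eq_comm]
  rw [← range_generators, Set.range_comp, ← AlgHom.map_adjoin, FreeAlgebra.adjoin_range_ι,
    Algebra.map_top, AlgHom.range_eq_top]
  exact RingQuot.mkAlgHom_surjective F (twistRel F m b)

namespace IsTwistedPair

variable {R : Type*} [Ring R] [Algebra F R] {A B : R}

/-- The algebra map `TwistAlg F m b → R` sending the generators to a given twisted pair: the
universal property of `TwistAlg F m b`. -/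
def lift (h : IsTwistedPair m b A B) : TwistAlg F m b →ₐ[F] R :=
  RingQuot.liftAlgHom F ⟨FreeAlgebra.lift F ![A, B], by
    rintro _ _ ⟨rfl, rfl⟩
    simpa using show A * B = m • (B * A) + algebraMap F R b from h⟩

theorem lift_genA (h : IsTwistedPair m b A B) : h.lift (genA F m b) = A := by
  simp [lift, genA]

theorem lift_genB (h : IsTwistedPair m b A B) : h.lift (genB F m b) = B := by
  simp [lift, genB]

theorem lift_normalMonomial (h : IsTwistedPair m b A B) (n : ℤ) (k : ℕ) :
    h.lift (normalMonomial (genA F m b) (genB F m b) n k) = normalMonomial A B n k := by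
  simp only [normalMonomial, Ring.lie_def, map_mul, map_pow, map_sub, h.lift_genA, h.lift_genB]

end IsTwistedPair

end TwistAlg

section WeightedShift

/-- The weighted shift `e_n ↦ w n · e_(n+d)` on the free `K`-module with basis `e_n`, `n : G`. -/
def weightedShift {G K : Type*} [Add G] [CommSemiring K] (d : G) (w : G → K) :
    Module.End K (G →₀ K) :=
  Finsupp.lsum K fun n => w n • Finsupp.lsingle (n + d)

theorem weightedShift_single {G K : Type*} [Add G] [CommSemiring K] (d : G) (w : G → K) (n : G)
    (x : K) : weightedShift d w (Finsupp.single n x) = Finsupp.single (n + d) (w n * x) := by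
  simp [weightedShift]

theorem weightedShift_pow_single {G K : Type*} [AddMonoid G] [CommSemiring K] (d : G) (w : G → K)
    (l : ℕ) (n : G) (x : K) :
    (weightedShift d w ^ l) (Finsupp.single n x) =
      Finsupp.single (n + l • d) ((∏ i ∈ Finset.range l, w (n + i • d)) * x) := by
  induction l with
  | zero => simp
  | succ l ih =>
    rw [pow_succ', Module.End.mul_apply, ih, weightedShift_single, Finset.prod_range_succ_comm,
      mul_assoc, add_assoc, ← succ_nsmul]

variable {K : Type*} [CommRing K]

theorem lie_weightedShift_one_neg_one (f : ℤ → K) :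
    ⁅weightedShift 1 (1 : ℤ → K), weightedShift (-1) f⁆ =
      weightedShift 0 fun n => f n - f (n + 1) := by
  refine Finsupp.lhom_ext fun n x => ?_
  simp [Ring.lie_def, weightedShift_single, sub_mul, -Finsupp.single_mul]

theorem isTwistedPair_weightedShift {F : Type*} [CommRing F] [Algebra F K] {m b : F} {f : ℤ → K}
    (hf : ∀ n, f n = m • f (n + 1) + algebraMap F K b) :
    IsTwistedPair m b (weightedShift 1 1) (weightedShift (-1) f) := by
  refine Finsupp.lhom_ext fun n x => ?_
  simp [weightedShift_single, hf n, add_mul, ← Algebra.smul_def, -Finsupp.single_mul]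

theorem normalMonomial_weightedShift_single_zero_one (f : ℤ → K) (n : ℤ) (k : ℕ) :
    normalMonomial (weightedShift 1 1) (weightedShift (-1) f) n k (Finsupp.single 0 1) =
      Finsupp.single n ((∏ i ∈ Finset.range (-n).toNat, f (n.toNat - i)) *
        (f n.toNat - f (n.toNat + 1)) ^ k) := by
  simp only [normalMonomial, lie_weightedShift_one_neg_one, Module.End.mul_apply,
    weightedShift_pow_single]
  simp [← sub_eq_add_neg, -Finsupp.single_mul]

theorem linearIndependent_normalMonomial_weightedShift {F : Type*} [CommRing F] [Algebra F K]
    [IsDomain K] {f : ℤ → K} (hf : ∀ n, f n ≠ 0)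
    (hfd : ∀ n, Transcendental F (f n - f (n + 1))) :
    LinearIndependent F fun p : ℤ × ℕ =>
      normalMonomial (weightedShift 1 1) (weightedShift (-1) f) p.1 p.2 := by
  refine LinearIndependent.of_comp (LinearMap.applyₗ' F (Finsupp.single 0 1)) ?_
  simp only [Function.comp_def, LinearMap.applyₗ'_apply_apply,
    normalMonomial_weightedShift_single_zero_one]
  let coefficient (n : ℤ) (k : ℕ) : K :=
    (∏ i ∈ Finset.range (-n).toNat, f (n.toNat - i)) * (f n.toNat - f (n.toNat + 1)) ^ k
  have linearIndependent_coefficient (n : ℤ) : LinearIndependent F (coefficient n) :=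
    linearIndependent_mul_pow_of_transcendental (Finset.prod_ne_zero_iff.2 fun i _ => hf _) (hfd _)
  exact (Finsupp.linearIndependent_single coefficient linearIndependent_coefficient).comp
    (Equiv.sigmaEquivProd ℤ ℕ).symm (Equiv.injective _)

end WeightedShift

section Independence

open Polynomial

theorem transcendental_smul_X {F : Type*} [CommRing F] [IsDomain F] {c : F} (hc : c ≠ 0) :
    Transcendental F (c • X : F[X]) := by
  have natDegree_ne_zero : (c • X : F[X]).natDegree ≠ 0 := by
    rw [natDegree_smul _ hc, natDegree_X]
    exact one_ne_zero
  simpa using (transcendental_X F).aeval (c • X) natDegree_ne_zero (by simpa using hc)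

variable {F : Type*} [Field F] {m b : F}

/-- The solution in `F[X]` of the recurrence `f n = m f (n + 1) + b` whose successive differences
are `m^(-n) X`. -/
def loweringWeight (m b : F) (n : ℤ) : F[X] :=
  (m - 1)⁻¹ • (m ^ (1 - n) • X - C b)

theorem loweringWeight_sub_loweringWeight_add_one (hm0 : m ≠ 0) (hm1 : m ≠ 1) (n : ℤ) :
    loweringWeight m b n - loweringWeight m b (n + 1) = m ^ (-n) • X := by
  have scalar_eq : m ^ (1 - n) - m ^ (1 - (n + 1)) = (m - 1) * m ^ (-n) := by
    rw [sub_add_cancel_right, sub_eq_add_neg 1 n, zpow_one_add₀ hm0]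
    ring
  rw [loweringWeight, loweringWeight, ← smul_sub, sub_sub_sub_cancel_right, ← sub_smul, scalar_eq,
    mul_smul, inv_smul_smul₀ (sub_ne_zero.2 hm1)]

theorem loweringWeight_recurrence (hm0 : m ≠ 0) (hm1 : m ≠ 1) (n : ℤ) :
    loweringWeight m b n = m • loweringWeight m b (n + 1) + algebraMap F F[X] b := by
  have zpow_step : m ^ (1 - n) = m * m ^ (1 - (n + 1)) := by
    rw [sub_add_cancel_right, sub_eq_add_neg 1 n, zpow_one_add₀ hm0]
  have := sub_ne_zero.2 hm1
  simp only [loweringWeight, zpow_step, ← Polynomial.algebraMap_eq,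
    Algebra.algebraMap_eq_smul_one]
  match_scalars <;> field_simp
  ring

theorem natDegree_loweringWeight (hm0 : m ≠ 0) (hm1 : m ≠ 1) (n : ℤ) :
    (loweringWeight m b n).natDegree = 1 := by
  rw [loweringWeight, natDegree_smul _ (inv_ne_zero (sub_ne_zero.2 hm1)), natDegree_sub_C,
    natDegree_smul _ (zpow_ne_zero _ hm0), natDegree_X]

theorem linearIndependent_normalMonomial_genA_genB (hm0 : m ≠ 0) (hm1 : m ≠ 1) :
    LinearIndependent F fun p : ℤ × ℕ =>
      normalMonomial (genA F m b) (genB F m b) p.1 p.2 := by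
  have isTwistedPair := isTwistedPair_weightedShift (loweringWeight_recurrence (b := b) hm0 hm1)
  refine LinearIndependent.of_comp isTwistedPair.lift.toLinearMap ?_
  simp only [Function.comp_def, AlgHom.toLinearMap_apply, isTwistedPair.lift_normalMonomial]
  refine linearIndependent_normalMonomial_weightedShift (fun n => ?_) fun n => ?_
  · exact ne_zero_of_natDegree_gt (n := 0) (by rw [natDegree_loweringWeight hm0 hm1]; exact one_pos)
  · rw [loweringWeight_sub_loweringWeight_add_one hm0 hm1]
    exact transcendental_smul_X (zpow_ne_zero _ hm0)

end Independence

section BasisFam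

/-- The pair `(n, k)` for which the normal monomial of index `(n, k)` is the given member of
`basisFam`. -/
def basisIndex : (ℕ × ℕ) ⊕ (ℕ × ℕ) ⊕ ℕ → ℤ × ℕ
  | .inl (k, l) => ((l + 1 : ℕ), k)
  | .inr (.inl (k, l)) => (-(l + 1 : ℕ), k)
  | .inr (.inr k) => (0, k)

theorem basisIndex_injective : Function.Injective basisIndex := by
  rintro (⟨k, l⟩ | ⟨k, l⟩ | k) (⟨k', l'⟩ | ⟨k', l'⟩ | k') h <;>
    simp only [basisIndex, Prod.mk.injEq] at h <;> grind

theorem basisIndex_surjective : Function.Surjective basisIndex := by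
  rintro ⟨n, k⟩
  obtain ⟨l, rfl | rfl⟩ := n.eq_nat_or_neg <;> rcases l with _ | l
  · exact ⟨.inr (.inr k), rfl⟩
  · exact ⟨.inl (k, l), rfl⟩
  · exact ⟨.inr (.inr k), rfl⟩
  · exact ⟨.inr (.inl (k, l)), rfl⟩

theorem basisFam_eq_normalMonomial_comp_basisIndex (F : Type*) [Field F] (m b : F) :
    basisFam F m b =
      (fun p : ℤ × ℕ => normalMonomial (genA F m b) (genB F m b) p.1 p.2) ∘ basisIndex := by
  funext i
  rcases i with ⟨k, l⟩ | ⟨k, l⟩ | k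
  · exact (normalMonomial_natCast _ _ _ _).symm
  · exact (normalMonomial_neg_natCast _ _ _ _).symm
  · simp [basisFam, basisIndex, normalMonomial, genC, Ring.lie_def]

end BasisFam

theorem stmt1 (F : Type*) [Field F] (m b : F) (hm0 : m ≠ 0) (hm1 : m ≠ 1) :
    LinearIndependent F (basisFam F m b) ∧
    Submodule.span F (Set.range (basisFam F m b)) = ⊤ := by
  rw [basisFam_eq_normalMonomial_comp_basisIndex, basisIndex_surjective.range_comp]
  exact ⟨(linearIndependent_normalMonomial_genA_genB hm0 hm1).comp _ basisIndex_injective,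
    isTwistedPair_genA_genB.span_normalMonomial_eq_top hm0 hm1 adjoin_genA_genB⟩
end
end

section
/- In the free unital associative algebra F⟨A,B,C⟩ on three generators A, B, C, the two-sided ideal generated by the two elements ζ₁ = AB − m·BA − b·1 and ζ₂ = C − AB + BA is equal to the two-sided ideal generated by the elements (m−1)·AB − (m·C − b·1), AC − m·CA, (m−1)·BA − (C − b·1), CB − m·BC, and m^k(m−1)·BC^kA − (C^{k+1} − b·C^k) for all integers k ≥ 1. -/
noncomputable section

open FreeAlgebra

/-- The generator `A` of the free algebra `F⟨A,B,C⟩` on three generators. -/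
def fA (F : Type*) [Field F] : FreeAlgebra F (Fin 3) := ι F 0

/-- The generator `B` of the free algebra `F⟨A,B,C⟩` on three generators. -/
def fB (F : Type*) [Field F] : FreeAlgebra F (Fin 3) := ι F 1

/-- The generator `C` of the free algebra `F⟨A,B,C⟩` on three generators. -/
def fC (F : Type*) [Field F] : FreeAlgebra F (Fin 3) := ι F 2

/-!
Membership in a two-sided ideal `I` is vanishing in the quotient by `I`, so it suffices to show that
in every algebra the two families of relations are equivalent. Since `m - 1` is invertible, the
relations `ζ₁ = ζ₂ = 0` amount to solving for `AB` and `BA` in terms of `C`. Computing `ABA` in two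
ways then gives `AC = m CA`, computing `BAB` in two ways gives `CB = m BC`, and moving `A` past
`C^n` in `BAC^n` gives the relation for `BC^nA`.
-/

theorem mul_pow_eq_pow_smul_pow_mul {k R : Type*} [CommSemiring k] [Semiring R] [Algebra k R]
    {m : k} {A C : R} (h : A * C = m • (C * A)) (n : ℕ) :
    A * C ^ n = m ^ n • (C ^ n * A) := by
  induction n with
  | zero => simp
  | succ n ih =>
    calc A * C ^ (n + 1) = A * C ^ n * C := by rw [pow_succ, mul_assoc]
      _ = m ^ n • (C ^ n * (A * C)) := by rw [ih, smul_mul_assoc, mul_assoc]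
      _ = m ^ (n + 1) • (C ^ (n + 1) * A) := by
        rw [h, mul_smul_comm, smul_smul, ← pow_succ, ← mul_assoc, ← pow_succ]

section Relations

variable {k R : Type*} [CommRing k] [Ring R] [Algebra k R] {m b : k} {A B C : R}

theorem smul_products_of_commutation_relations
    (hζ₁ : A * B - m • (B * A) = algebraMap k R b) (hζ₂ : C = A * B - B * A) :
    (m - 1) • (A * B) = m • C - algebraMap k R b ∧
      (m - 1) • (B * A) = C - algebraMap k R b := by
  rw [← hζ₁, hζ₂]
  constructor <;> module

theorem commutation_relations_of_smul_products (hm : IsUnit (m - 1))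
    (hAB : (m - 1) • (A * B) = m • C - algebraMap k R b)
    (hBA : (m - 1) • (B * A) = C - algebraMap k R b) :
    A * B - m • (B * A) = algebraMap k R b ∧ C = A * B - B * A := by
  constructor <;> refine hm.smul_left_cancel.mp ?_
  · rw [smul_sub, smul_comm, hAB, hBA]
    module
  · rw [smul_sub, hAB, hBA]
    module

theorem mul_eq_smul_mul_of_smul_products
    (hAB : (m - 1) • (A * B) = m • C - algebraMap k R b)
    (hBA : (m - 1) • (B * A) = C - algebraMap k R b) :
    A * C = m • (C * A) ∧ C * B = m • (B * C) := by
  constructor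
  · have hABA : A * (C - algebraMap k R b) = (m • C - algebraMap k R b) * A := by
      rw [← hAB, ← hBA, mul_smul_comm, smul_mul_assoc, mul_assoc]
    rwa [mul_sub, sub_mul, smul_mul_assoc, ← Algebra.commutes b A, sub_left_inj] at hABA
  · have hBAB : (C - algebraMap k R b) * B = B * (m • C - algebraMap k R b) := by
      rw [← hAB, ← hBA, mul_smul_comm, smul_mul_assoc, mul_assoc]
    rwa [mul_sub, sub_mul, mul_smul_comm, Algebra.commutes b B, sub_left_inj] at hBAB

theorem smul_mul_pow_mul_of_smul_mul (hBA : (m - 1) • (B * A) = C - algebraMap k R b)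
    (hAC : A * C = m • (C * A)) (n : ℕ) :
    (m ^ n * (m - 1)) • (B * C ^ n * A) = C ^ (n + 1) - b • C ^ n :=
  calc (m ^ n * (m - 1)) • (B * C ^ n * A) = (m - 1) • (B * (m ^ n • (C ^ n * A))) := by
        rw [mul_smul_comm, smul_smul, mul_comm, mul_assoc]
    _ = (m - 1) • (B * A) * C ^ n := by
        rw [← mul_pow_eq_pow_smul_pow_mul hAC, smul_mul_assoc, mul_assoc]
    _ = C ^ (n + 1) - b • C ^ n := by
        rw [hBA, sub_mul, ← pow_succ', ← Algebra.smul_def]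

theorem commutation_relations_iff (hm : IsUnit (m - 1)) :
    (A * B - m • (B * A) = algebraMap k R b ∧ C = A * B - B * A) ↔
      ((m - 1) • (A * B) = m • C - algebraMap k R b ∧ A * C = m • (C * A) ∧
        (m - 1) • (B * A) = C - algebraMap k R b ∧ C * B = m • (B * C)) ∧
      ∀ n : ℕ, 1 ≤ n → (m ^ n * (m - 1)) • (B * C ^ n * A) = C ^ (n + 1) - b • C ^ n := by
  constructor
  · rintro ⟨hζ₁, hζ₂⟩
    obtain ⟨hAB, hBA⟩ := smul_products_of_commutation_relations hζ₁ hζ₂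
    obtain ⟨hAC, hCB⟩ := mul_eq_smul_mul_of_smul_products hAB hBA
    exact ⟨⟨hAB, hAC, hBA, hCB⟩, fun n _ => smul_mul_pow_mul_of_smul_mul hBA hAC n⟩
  · rintro ⟨⟨hAB, -, hBA, -⟩, -⟩
    exact commutation_relations_of_smul_products hm hAB hBA

end Relations

theorem span_le_iff_forall_mkₐ_eq_zero (k : Type*) {R : Type*} [CommSemiring k] [Ring R]
    [Algebra k R] {S : Set R} {I : TwoSidedIdeal R} :
    TwoSidedIdeal.span S ≤ I ↔ ∀ x ∈ S, I.ringCon.mkₐ k x = 0 := by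
  have mem_iff (x : R) : x ∈ I ↔ I.ringCon.mkₐ k x = 0 := by
    conv_lhs => rw [← I.ker_ringCon_mk']
    exact TwoSidedIdeal.mem_ker _
  simp only [TwoSidedIdeal.span_le, Set.subset_def, SetLike.mem_coe, mem_iff]

theorem stmt2_general {k R : Type*} [CommRing k] [Ring R] [Algebra k R] {m : k}
    (hm : IsUnit (m - 1)) (b : k) (A B C : R) :
    TwoSidedIdeal.span
      ({A * B - m • (B * A) - algebraMap k R b, C - A * B + B * A} : Set R) =
    TwoSidedIdeal.span
      (({(m - 1) • (A * B) - (m • C - algebraMap k R b),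
         A * C - m • (C * A),
         (m - 1) • (B * A) - (C - algebraMap k R b),
         C * B - m • (B * C)} : Set R) ∪
       {w | ∃ n : ℕ, 1 ≤ n ∧
          w = (m ^ n * (m - 1)) • (B * C ^ n * A) - (C ^ (n + 1) - b • C ^ n)}) := by
  refine eq_of_forall_ge_iff fun I => ?_
  have relations_iff := commutation_relations_iff (b := b) (A := I.ringCon.mkₐ k A)
    (B := I.ringCon.mkₐ k B) (C := I.ringCon.mkₐ k C) hm
  simpa [span_le_iff_forall_mkₐ_eq_zero k, or_imp, forall_and,
    forall_comm (α := R), sub_eq_zero, sub_add] using relations_iff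

theorem stmt2 (F : Type*) [Field F] (m b : F) (hm0 : m ≠ 0) (hm1 : m ≠ 1) :
    TwoSidedIdeal.span
      ({fA F * fB F - m • (fB F * fA F) - algebraMap F (FreeAlgebra F (Fin 3)) b,
        fC F - fA F * fB F + fB F * fA F} : Set (FreeAlgebra F (Fin 3))) =
    TwoSidedIdeal.span
      (({(m - 1) • (fA F * fB F) - (m • fC F - algebraMap F (FreeAlgebra F (Fin 3)) b),
         fA F * fC F - m • (fC F * fA F),
         (m - 1) • (fB F * fA F) - (fC F - algebraMap F (FreeAlgebra F (Fin 3)) b),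
         fC F * fB F - m • (fB F * fC F)} : Set (FreeAlgebra F (Fin 3))) ∪
       {w | ∃ k : ℕ, 1 ≤ k ∧
          w = (m ^ k * (m - 1)) • (fB F * fC F ^ k * fA F) -
              (fC F ^ (k + 1) - b • fC F ^ k)}) :=
  stmt2_general (sub_ne_zero.mpr hm1).isUnit b (fA F) (fB F) (fC F)
end
end

section
/- For all integers k, x, y ≥ 1, the relation [C^k, C^x A^y] = (1 − m^{ky})·C^{k+x} A^y holds in R. -/
noncomputable section

open FreeAlgebra

/-!
Since the constant term `b` is central, `A C = [A, AB] = [A, m BA + b] = m [A, BA] = m C A`.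
Iterating, moving `A ^ y` to the right of `C ^ k` costs the factor `m ^ (k y)`.
-/

section SMul

variable {M R : Type*} [Monoid M] [Monoid R] [MulAction M R] [IsScalarTower M R R]
  [SMulCommClass M R R] {q : M} {a c : R}

theorem semiconjBy_pow_left_smul (h : SemiconjBy a c (q • c)) (n : ℕ) :
    SemiconjBy (a ^ n) c (q ^ n • c) := by
  induction n with
  | zero => simp
  | succ n ih =>
    rw [pow_succ' a, pow_succ q, mul_smul]
    exact (h.smul_right (q ^ n)).mul_left ih

theorem pow_mul_pow_of_semiconjBy_smul (h : SemiconjBy a c (q • c)) (k n : ℕ) :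
    a ^ n * c ^ k = q ^ (k * n) • (c ^ k * a ^ n) :=
  calc
    a ^ n * c ^ k = (q ^ n • c) ^ k * a ^ n := (semiconjBy_pow_left_smul h n).pow_right k
    _ = q ^ (k * n) • (c ^ k * a ^ n) := by
      rw [smul_pow, smul_mul_assoc, ← pow_mul, Nat.mul_comm]

end SMul

theorem semiconjBy_commutator_smul {M R : Type*} [Monoid M] [Ring R] [DistribMulAction M R]
    [IsScalarTower M R R] [SMulCommClass M R R] {q : M} {A B r : R}
    (hAB : A * B = q • (B * A) + r) (hr : Commute A r) :
    SemiconjBy A (A * B - B * A) (q • (A * B - B * A)) :=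
  calc
    A * (A * B - B * A) = A * (A * B) - A * B * A := by rw [mul_sub, mul_assoc]
    _ = A * (q • (B * A) + r) - (q • (B * A) + r) * A := by rw [hAB]
    _ = q • (A * (B * A)) - q • (B * A * A) := by
      rw [mul_add, add_mul, hr.eq, add_sub_add_right_eq_sub, mul_smul_comm, smul_mul_assoc]
    _ = q • (A * B - B * A) * A := by rw [smul_mul_assoc, sub_mul, smul_sub, mul_assoc A B A]

section Module

variable {K R : Type*} [Ring K] [Ring R] [Module K R] [IsScalarTower K R R]
  [SMulCommClass K R R] {q : K}

theorem lie_pow_pow_mul_pow_of_semiconjBy_smul {a c : R} (h : SemiconjBy a c (q • c))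
    (k x y : ℕ) :
    ⁅c ^ k, c ^ x * a ^ y⁆ = (1 - q ^ (k * y)) • (c ^ (k + x) * a ^ y) := by
  have move_right : c ^ x * a ^ y * c ^ k = q ^ (k * y) • (c ^ (k + x) * a ^ y) := by
    rw [mul_assoc, pow_mul_pow_of_semiconjBy_smul h, mul_smul_comm, ← mul_assoc, ← pow_add,
      add_comm x k]
  rw [Ring.lie_def, move_right, ← mul_assoc, ← pow_add, sub_smul, one_smul]

theorem stmt7_general {A B r : R} (hAB : A * B = q • (B * A) + r) (hr : Commute A r)
    (k x y : ℕ) :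
    ⁅(A * B - B * A) ^ k, (A * B - B * A) ^ x * A ^ y⁆ =
      (1 - q ^ (k * y)) • ((A * B - B * A) ^ (k + x) * A ^ y) :=
  lie_pow_pow_mul_pow_of_semiconjBy_smul (semiconjBy_commutator_smul hAB hr) k x y

end Module

theorem genA_mul_genB (F : Type*) [Field F] (m b : F) :
    genA F m b * genB F m b = m • (genB F m b * genA F m b) + algebraMap F _ b := by
  simpa only [genA, genB, map_mul, map_add, map_smul, AlgHom.commutes] using
    RingQuot.mkAlgHom_rel F (s := twistRel F m b) ⟨rfl, rfl⟩

theorem stmt7 (F : Type*) [Field F] (m b : F) (hm0 : m ≠ 0) (hm1 : m ≠ 1)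
    (k x y : ℕ) (hk : 1 ≤ k) (hx : 1 ≤ x) (hy : 1 ≤ y) :
    ⁅genC F m b ^ k, genC F m b ^ x * genA F m b ^ y⁆ =
      (1 - m ^ (k * y)) • (genC F m b ^ (k + x) * genA F m b ^ y) :=
  stmt7_general (genA_mul_genB F m b) (Algebra.commute_algebraMap_right b _) k x y
end
end

section
/- For all integers x, y ≥ 1, the relation m^x(m − 1)·[B, C^x A^y] = (1 − m^{x+y})·C^{x+1} A^{y−1} + (m^x − 1)·b·C^x A^{y−1} holds in R (equivalently, [B, C^x A^y] = ((m^{−x} − m^y)/(m−1))·C^{x+1} A^{y−1} + ((1 − m^{−x})/(m−1))·b·C^x A^{y−1}). -/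
noncomputable section

open FreeAlgebra

/-!
Write `C = ⁅A, B⁆`. The relation `AB = m BA + b` makes both `(m - 1) BA = C - b` and
`(m - 1) AB = m C - b` affine in `C`, and computing `ABA` and `BAB` in two ways gives `AC = m CA`
and `CB = m BC`. Moving `B` through `C ^ x` from the left and `C` through a power of `A` then
normalizes both products `B C ^ x A ^ (y + 1)` and `C ^ x A ^ (y + 1) B`; subtracting gives the
bracket.
-/

theorem pow_mul_eq_pow_smul_of_mul_eq_smul {K R : Type*} [Monoid K] [Monoid R] [MulAction K R]
    [IsScalarTower K R R] [SMulCommClass K R R] {q : K} {u v : R} (h : u * v = q • (v * u))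
    (n : ℕ) : u ^ n * v = q ^ n • (v * u ^ n) := by
  have semiconj : SemiconjBy v (q • u) u := by rw [SemiconjBy, mul_smul_comm, h]
  rw [← (semiconj.pow_right n).eq, smul_pow, mul_smul_comm]

/-- Elements `A`, `B` of a `K`-algebra satisfying the relation `AB = m BA + b`; such pairs are
exactly the images of the generators under algebra maps from the algebra presented by it. -/
def IsTwistPair_s14 {K R : Type*} [CommRing K] [Ring R] [Algebra K R] (m b : K) (A B : R) : Prop :=
  A * B = m • (B * A) + algebraMap K R b

namespace IsTwistPair_s14

variable {K R : Type*} [CommRing K] [Ring R] [Algebra K R] {m b : K} {A B : R}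

theorem sub_one_smul_mul_swap (h : IsTwistPair_s14 m b A B) :
    (m - 1) • (B * A) = ⁅A, B⁆ - algebraMap K R b := by
  rw [Ring.lie_def, h]
  module

theorem sub_one_smul_mul (h : IsTwistPair_s14 m b A B) :
    (m - 1) • (A * B) = m • ⁅A, B⁆ - algebraMap K R b := by
  rw [Ring.lie_def, h]
  module

theorem mul_lie (h : IsTwistPair_s14 m b A B) : A * ⁅A, B⁆ = m • (⁅A, B⁆ * A) := by
  have reassociated : A * (⁅A, B⁆ - algebraMap K R b) = (m • ⁅A, B⁆ - algebraMap K R b) * A := by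
    rw [← h.sub_one_smul_mul_swap, ← h.sub_one_smul_mul, mul_smul_comm, smul_mul_assoc, mul_assoc]
  rwa [mul_sub, sub_mul, ← Algebra.commutes b A, sub_left_inj, smul_mul_assoc] at reassociated

theorem lie_mul (h : IsTwistPair_s14 m b A B) : ⁅A, B⁆ * B = m • (B * ⁅A, B⁆) := by
  have reassociated : (⁅A, B⁆ - algebraMap K R b) * B = B * (m • ⁅A, B⁆ - algebraMap K R b) := by
    rw [← h.sub_one_smul_mul_swap, ← h.sub_one_smul_mul, mul_smul_comm, smul_mul_assoc, mul_assoc]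
  rwa [mul_sub, sub_mul, Algebra.commutes b B, sub_left_inj, mul_smul_comm] at reassociated

theorem smul_mul_lie_pow_mul_pow (h : IsTwistPair_s14 m b A B) (x y : ℕ) :
    (m ^ x * (m - 1)) • (B * (⁅A, B⁆ ^ x * A ^ (y + 1))) =
      ⁅A, B⁆ ^ (x + 1) * A ^ y - b • (⁅A, B⁆ ^ x * A ^ y) :=
  calc (m ^ x * (m - 1)) • (B * (⁅A, B⁆ ^ x * A ^ (y + 1)))
      = (m - 1) • ((m ^ x • (B * ⁅A, B⁆ ^ x)) * A ^ (y + 1)) := by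
        rw [mul_comm, mul_smul, smul_mul_assoc, mul_assoc]
    _ = (m - 1) • ((⁅A, B⁆ ^ x * B) * A ^ (y + 1)) := by
        rw [pow_mul_eq_pow_smul_of_mul_eq_smul h.lie_mul]
    _ = ⁅A, B⁆ ^ x * ((m - 1) • (B * A)) * A ^ y := by
        simp only [pow_succ', mul_smul_comm, smul_mul_assoc, mul_assoc]
    _ = ⁅A, B⁆ ^ (x + 1) * A ^ y - b • (⁅A, B⁆ ^ x * A ^ y) := by
        rw [h.sub_one_smul_mul_swap, mul_sub, sub_mul, ← pow_succ, ← Algebra.commutes, mul_assoc,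
          ← Algebra.smul_def]

theorem smul_lie_pow_mul_pow_mul (h : IsTwistPair_s14 m b A B) (x y : ℕ) :
    (m - 1) • (⁅A, B⁆ ^ x * A ^ (y + 1) * B) =
      m ^ (y + 1) • (⁅A, B⁆ ^ (x + 1) * A ^ y) - b • (⁅A, B⁆ ^ x * A ^ y) :=
  calc (m - 1) • (⁅A, B⁆ ^ x * A ^ (y + 1) * B)
      = ⁅A, B⁆ ^ x * (A ^ y * ((m - 1) • (A * B))) := by
        simp only [pow_succ, mul_smul_comm, mul_assoc]
    _ = ⁅A, B⁆ ^ x * (m • (A ^ y * ⁅A, B⁆) - b • A ^ y) := by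
        rw [h.sub_one_smul_mul, mul_sub, mul_smul_comm, ← Algebra.commutes, ← Algebra.smul_def]
    _ = ⁅A, B⁆ ^ x * (m ^ (y + 1) • (⁅A, B⁆ * A ^ y) - b • A ^ y) := by
        rw [pow_mul_eq_pow_smul_of_mul_eq_smul h.mul_lie, smul_smul, ← pow_succ']
    _ = m ^ (y + 1) • (⁅A, B⁆ ^ (x + 1) * A ^ y) - b • (⁅A, B⁆ ^ x * A ^ y) := by
        rw [mul_sub, mul_smul_comm, mul_smul_comm, ← mul_assoc, ← pow_succ]

end IsTwistPair_s14

theorem isTwistPair_genA_genB (F : Type*) [Field F] (m b : F) :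
    IsTwistPair_s14 m b (genA F m b) (genB F m b) := by
  have relation := RingQuot.mkAlgHom_rel F (s := twistRel F m b) ⟨rfl, rfl⟩
  rwa [map_mul, map_add, map_smul, map_mul, AlgHom.commutes] at relation

theorem stmt14_general {K R : Type*} [CommRing K] [Ring R] [Algebra K R] {m b : K} {A B : R}
    (h : IsTwistPair_s14 m b A B) (x y : ℕ) :
    (m ^ x * (m - 1)) • ⁅B, ⁅A, B⁆ ^ x * A ^ (y + 1)⁆ =
      (1 - m ^ (x + (y + 1))) • (⁅A, B⁆ ^ (x + 1) * A ^ y) +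
        ((m ^ x - 1) * b) • (⁅A, B⁆ ^ x * A ^ y) := by
  rw [Ring.lie_def B, smul_sub, h.smul_mul_lie_pow_mul_pow, mul_smul,
    h.smul_lie_pow_mul_pow_mul, pow_add m x]
  module

theorem stmt14 (F : Type*) [Field F] (m b : F) (hm0 : m ≠ 0) (hm1 : m ≠ 1)
    (x y : ℕ) (hx : 1 ≤ x) (hy : 1 ≤ y) :
    (m ^ x * (m - 1)) • ⁅genB F m b, genC F m b ^ x * genA F m b ^ y⁆ =
      (1 - m ^ (x + y)) • (genC F m b ^ (x + 1) * genA F m b ^ (y - 1)) +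
        ((m ^ x - 1) * b) • (genC F m b ^ x * genA F m b ^ (y - 1)) := by
  obtain ⟨y, rfl⟩ := Nat.exists_eq_add_of_le' hy
  exact stmt14_general (isTwistPair_genA_genB F m b) x y
end
end

section
/- For every integer n ≥ 1, there exist elements f and g in the unital subalgebra of R generated by C (i.e., polynomials in C) such that (m−1)^n·A^n B^n = (−1)^n b^n·1 + C·f and (m−1)^n·B^n A^n = (−1)^n b^n·1 + C·g. -/
noncomputable section

open FreeAlgebra

/-!
Put `C = ⁅A, B⁆`. The relation `AB = m·BA + b` makes `(m - 1)·AB = m·C - b` and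
`(m - 1)·BA = C - b` polynomials in `C`, and it lets `C` be moved past the generators by rescaling:
`AC = (m·C)A` and `BC = (m⁻¹·C)B`. Peeling off the innermost factor of `A ^ n * B ^ n` therefore
gives the exact formula `(m - 1) ^ n · A ^ n * B ^ n = ∏ k < n, (m · m ^ k · C - b)`, and likewise
`(m - 1) ^ n · B ^ n * A ^ n = ∏ k < n, (m⁻¹ ^ k · C - b)`; each side is a polynomial in `C` with
constant coefficient `(-b) ^ n`.
-/

section Semiconj

open Polynomial

variable {K R : Type*} [CommSemiring K] [Semiring R] [Algebra K R] {a x y : R} {c : K}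

theorem semiconjBy_pow_smul (hx : SemiconjBy x a (c • a)) (n : ℕ) :
    SemiconjBy (x ^ n) a (c ^ n • a) := by
  induction n with
  | zero => simp
  | succ n ih =>
    rw [pow_succ', pow_succ, mul_smul]
    exact (hx.smul_right (c ^ n)).mul_left ih

theorem semiconjBy_aeval {a' : R} (hx : SemiconjBy x a a') (p : K[X]) :
    SemiconjBy x (aeval a p) (aeval a' p) := by
  induction p using Polynomial.induction_on' with
  | add p q hp hq => simpa only [map_add] using hp.add_right hq
  | monomial n r =>
    simpa only [aeval_monomial] using
      SemiconjBy.mul_right (Algebra.commutes r x).symm (hx.pow_right n)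

theorem aeval_smul_eq_aeval_comp (c : K) (a : R) (p : K[X]) :
    aeval (c • a) p = aeval a (p.comp (C c * X)) := by
  rw [aeval_comp, map_mul, aeval_C, aeval_X, Algebra.smul_def]

theorem pow_mul_pow_eq_aeval_prod {p : K[X]} (hx : SemiconjBy x a (c • a))
    (hxy : x * y = aeval a p) (n : ℕ) :
    x ^ n * y ^ n = aeval a (∏ k ∈ Finset.range n, p.comp (C (c ^ k) * X)) := by
  induction n with
  | zero => simp
  | succ n ih =>
    calc x ^ (n + 1) * y ^ (n + 1)
        = x ^ n * (x * y) * y ^ n := by simp only [pow_succ x, pow_succ' y, mul_assoc]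
      _ = aeval (c ^ n • a) p * (x ^ n * y ^ n) := by
        rw [hxy, (semiconjBy_aeval (semiconjBy_pow_smul hx n) p).eq, mul_assoc]
      _ = aeval a (∏ k ∈ Finset.range (n + 1), p.comp (C (c ^ k) * X)) := by
        rw [aeval_smul_eq_aeval_comp, ih, ← map_mul, mul_comm, ← Finset.prod_range_succ]

theorem coeff_zero_prod_comp_C_mul_X (p : K[X]) (c : ℕ → K) (n : ℕ) :
    (∏ k ∈ Finset.range n, p.comp (C (c k) * X)).coeff 0 = p.coeff 0 ^ n := by
  simp [coeff_zero_prod]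

theorem exists_mem_adjoin_aeval_eq (p : K[X]) (a : R) :
    ∃ f ∈ Algebra.adjoin K {a}, aeval a p = p.coeff 0 • (1 : R) + a * f := by
  refine ⟨aeval a p.divX, aeval_mem_adjoin_singleton K a, ?_⟩
  calc aeval a p
      = aeval a (X * p.divX + C (p.coeff 0)) := by rw [X_mul_divX_add]
    _ = p.coeff 0 • (1 : R) + a * aeval a p.divX := by
      rw [map_add, map_mul, aeval_X, aeval_C, Algebra.algebraMap_eq_smul_one, add_comm]

theorem exists_mem_adjoin_pow_mul_pow_eq {p : K[X]} (hx : SemiconjBy x a (c • a))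
    (hxy : x * y = aeval a p) (n : ℕ) :
    ∃ f ∈ Algebra.adjoin K {a}, x ^ n * y ^ n = p.coeff 0 ^ n • (1 : R) + a * f := by
  rw [pow_mul_pow_eq_aeval_prod hx hxy, ← coeff_zero_prod_comp_C_mul_X p (c ^ ·)]
  exact exists_mem_adjoin_aeval_eq _ a

end Semiconj

section Twisted

variable {K R : Type*} [CommRing K] [Ring R] [Algebra K R] {m b : K} {A B : R}

open Polynomial in
theorem exists_mem_adjoin_smul_pow_mul_pow_eq {a x y : R} {c d s : K}
    (hx : SemiconjBy x a (c • a)) (hxy : d • a = s • (x * y) + b • (1 : R)) (n : ℕ) :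
    ∃ f ∈ Algebra.adjoin K {a},
      s ^ n • (x ^ n * y ^ n) = ((-1) ^ n * b ^ n) • (1 : R) + a * f := by
  have hpoly : s • x * y = aeval a (C d * X - C b) := by
    simp [hxy, Algebra.algebraMap_eq_smul_one]
  have hcoeff : (C d * X - C b).coeff 0 = -1 * b := by simp
  simpa only [_root_.smul_pow, smul_mul_assoc, hcoeff, mul_pow] using
    exists_mem_adjoin_pow_mul_pow_eq (hx.smul_left s) hpoly n

/-- The defining relation of `TwistAlg`, imposed on two elements `A`, `B` of an arbitrary algebra
over a commutative ring. -/
def TwistedCommute (m b : K) (A B : R) : Prop :=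
  A * B = m • (B * A) + b • (1 : R)

namespace TwistedCommute

theorem lie_eq (h : TwistedCommute m b A B) : ⁅A, B⁆ = (m - 1) • (B * A) + b • (1 : R) := by
  rw [Ring.lie_def, h]
  module

theorem smul_lie_eq (h : TwistedCommute m b A B) :
    m • ⁅A, B⁆ = (m - 1) • (A * B) + b • (1 : R) := by
  rw [Ring.lie_def, h]
  module

theorem semiconjBy_lie_left (h : TwistedCommute m b A B) : SemiconjBy A ⁅A, B⁆ (m • ⁅A, B⁆) := by
  rw [SemiconjBy, h.smul_lie_eq, h.lie_eq]
  simp [mul_add, add_mul, mul_assoc]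

theorem semiconjBy_smul_lie_right (h : TwistedCommute m b A B) :
    SemiconjBy B (m • ⁅A, B⁆) ⁅A, B⁆ := by
  rw [SemiconjBy, h.smul_lie_eq, h.lie_eq]
  simp [mul_add, add_mul, mul_assoc]

theorem semiconjBy_lie_right {m : Kˣ} (h : TwistedCommute (m : K) b A B) :
    SemiconjBy B ⁅A, B⁆ ((↑m⁻¹ : K) • ⁅A, B⁆) := by
  simpa only [smul_smul, Units.inv_mul, one_smul] using
    h.semiconjBy_smul_lie_right.smul_right (↑m⁻¹ : K)

end TwistedCommute

theorem stmt16_general (hm : IsUnit m) (h : TwistedCommute m b A B) (n : ℕ) :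
    ∃ f ∈ Algebra.adjoin K {⁅A, B⁆}, ∃ g ∈ Algebra.adjoin K {⁅A, B⁆},
      (m - 1) ^ n • (A ^ n * B ^ n) = ((-1) ^ n * b ^ n) • (1 : R) + ⁅A, B⁆ * f ∧
      (m - 1) ^ n • (B ^ n * A ^ n) = ((-1) ^ n * b ^ n) • (1 : R) + ⁅A, B⁆ * g := by
  obtain ⟨m, rfl⟩ := hm
  obtain ⟨f, hf, hAB⟩ :=
    exists_mem_adjoin_smul_pow_mul_pow_eq h.semiconjBy_lie_left h.smul_lie_eq n
  obtain ⟨g, hg, hBA⟩ :=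
    exists_mem_adjoin_smul_pow_mul_pow_eq h.semiconjBy_lie_right
      ((one_smul K _).trans h.lie_eq) n
  exact ⟨f, hf, g, hg, hAB, hBA⟩

end Twisted

theorem twistedCommute_genA_genB (F : Type*) [Field F] (m b : F) :
    TwistedCommute m b (genA F m b) (genB F m b) := by
  unfold TwistedCommute genA genB
  simpa only [map_mul, map_add, map_smul, Algebra.algebraMap_eq_smul_one, map_one] using
    RingQuot.mkAlgHom_rel F (s := twistRel F m b) ⟨rfl, rfl⟩

theorem stmt16 (F : Type*) [Field F] (m b : F) (hm0 : m ≠ 0) (hm1 : m ≠ 1)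
    (n : ℕ) (hn : 1 ≤ n) :
    ∃ f ∈ Algebra.adjoin F {genC F m b}, ∃ g ∈ Algebra.adjoin F {genC F m b},
      (m - 1) ^ n • (genA F m b ^ n * genB F m b ^ n) =
        ((-1 : F) ^ n * b ^ n) • (1 : TwistAlg F m b) + genC F m b * f ∧
      (m - 1) ^ n • (genB F m b ^ n * genA F m b ^ n) =
        ((-1 : F) ^ n * b ^ n) • (1 : TwistAlg F m b) + genC F m b * g := by
  exact stmt16_general hm0.isUnit (twistedCommute_genA_genB F m b) n
end
end
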